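/- For every integer n ≥ 1 and every real t, the probability generating function of the number of vertices satisfies E[t^{N_n}] = 1 + Σ_{ℓ=1}^{n} (−1)^ℓ·C(n,ℓ)·Π_{i=1}^{ℓ} (1 − 2t/(i(i+1))) = Σ_{k=1}^{n} t^k · Σ_{ℓ=k}^{n} (−1)^{ℓ+k}·C(n,ℓ)·c(k,ℓ). -/

import Mathlib

open MeasureTheory

noncomputable section

/-- The triangle with vertices (0,0), (1,0), (0,1). -/
def T : Set (ℝ × ℝ) := convexHull ℝ {(0, 0), (1, 0), (0, 1)}

/-- The uniform distribution on `T`: twice Lebesgue measure restricted to `T`. -/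
def μT : Measure (ℝ × ℝ) := (2 : ENNReal) • (volume.restrict T)

/-- Joint law of `n` independent uniform points in `T`. -/
def P (n : ℕ) : Measure (Fin n → ℝ × ℝ) := Measure.pi fun _ => μT

/-- The random convex chain: convex hull of the points together with `(1,0)` and `(0,1)`. -/
def Tchain (n : ℕ) (ω : Fin n → ℝ × ℝ) : Set (ℝ × ℝ) :=
  convexHull ℝ (Set.range ω ∪ {(1, 0), (0, 1)})

/-- Normalized area `V_n = 2 vol(T_n)`. -/
def V (n : ℕ) (ω : Fin n → ℝ × ℝ) : ℝ := 2 * (volume (Tchain n ω)).toReal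

/-- Number of vertices of `T_n` other than the two corners. -/
def N (n : ℕ) (ω : Fin n → ℝ × ℝ) : ℕ :=
  (Set.extremePoints ℝ (Tchain n ω)).ncard - 2

/-- Normalized moments `q_{n,k} = C(n+k,k) E[V_n^k]`. -/
def q (n k : ℕ) : ℝ := ((n + k).choose k : ℝ) * ∫ ω, (V n ω) ^ k ∂ P n

/-- Probability generating function of `N_n`. -/
def G (n : ℕ) (t : ℝ) : ℝ := ∫ ω, t ^ (N n ω) ∂ P n

/-- Harmonic number. -/
def H (j : ℕ) : ℝ := ∑ i ∈ Finset.range j, 1 / ((i : ℝ) + 1)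

/-- Generalized harmonic number of order 2. -/
def H2 (j : ℕ) : ℝ := ∑ i ∈ Finset.range j, 1 / ((i : ℝ) + 1) ^ 2

/-- `c(k,ℓ)`: elementary symmetric polynomial `e_k` of `2/(j(j+1))`, `j = 1,…,ℓ`. -/
def c (k l : ℕ) : ℝ :=
  ∑ S ∈ (Finset.Icc 1 l).powersetCard k, ∏ j ∈ S, 2 / ((j : ℝ) * ((j : ℝ) + 1))

/- Sweep `T` by rotating a line about `(0, 1)`, and let `p` be the first of the `m + 1` points it
meets, `(a, 0)` being the point where it then crosses the horizontal axis. Then `p` is a vertex. Of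
the remaining points, those outside the triangle `Δ` with vertices `p`, `(1, 0)`, `(a, 0)` lie in
the triangle with vertices `p`, `(0, 1)`, `(1, 0)` and are not vertices, while those inside `Δ` form
an independent uniform sample of `Δ`, which an affine map turns into a sample of `T` whose chain
vertices are the remaining vertices. Integrating over `p` gives
`G (m + 1) t = 2 t / ((m + 1) (m + 2)) ∑ j ≤ m, (m + 1 - j) G j t`, `G 0 t = 1`.
The binomial transform of `(-1) ^ l ∏ i ≤ l, (1 - 2 t / (i (i + 1)))` satisfies the same recurrence:
summing twice along a diagonal of Pascal's triangle turns `C(j, l)` into `C(m + 2, l + 2)`, the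
prefactor turns that into `2 t / ((l + 1) (l + 2)) C(m, l)`, and this factor is the difference of
consecutive products. -/

section BinomialTransform

variable {R : Type*} [CommRing R]

lemma sum_range_choose_left (n l : ℕ) :
    ∑ j ∈ Finset.range n, j.choose l = n.choose (l + 1) := by
  induction n with
  | zero => simp
  | succ n ih => rw [Finset.sum_range_succ, ih, Nat.choose_succ_succ, add_comm]

lemma sum_range_sub_mul_choose (n l : ℕ) :
    ∑ j ∈ Finset.range n, ((n : R) - j) * j.choose l = (n + 1).choose (l + 2) := by
  induction n with
  | zero => simp [Nat.choose_eq_zero_of_lt]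
  | succ n ih =>
    have hsplit : ∀ j ∈ Finset.range (n + 1), (((n + 1 : ℕ) : R) - j) * j.choose l =
        ((n : R) - j) * j.choose l + j.choose l := fun j _ ↦ by push_cast; ring
    rw [Finset.sum_congr rfl hsplit, Finset.sum_add_distrib, ← Nat.cast_sum,
      sum_range_choose_left, Finset.sum_range_succ, ih, Nat.choose_succ_succ (n + 1)]
    push_cast
    ring

/-- The binomial transform `n ↦ ∑ C(n, l) a_l` of a sequence `a`, without the alternating sign that
some authors include. -/
def binomialTransform (a : ℕ → R) (n : ℕ) : R :=
  ∑ l ∈ Finset.range (n + 1), (n.choose l : R) * a l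

lemma binomialTransform_eq_sum_range (a : ℕ → R) {m n : ℕ} (hmn : m < n) :
    binomialTransform a m = ∑ l ∈ Finset.range n, (m.choose l : R) * a l := by
  refine Finset.sum_subset (Finset.range_mono hmn) fun l _ hl ↦ ?_
  rw [Finset.mem_range, not_lt] at hl
  rw [Nat.choose_eq_zero_of_lt hl, Nat.cast_zero, zero_mul]

lemma binomialTransform_succ (a : ℕ → R) (n : ℕ) :
    binomialTransform a (n + 1) = binomialTransform (fun l ↦ a l + a (l + 1)) n := by
  simp only [binomialTransform, Finset.sum_choose_succ_mul (fun i _ ↦ a i), mul_add,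
    Finset.sum_add_distrib]

lemma sum_range_sub_mul_binomialTransform (a : ℕ → R) (n : ℕ) :
    ∑ j ∈ Finset.range n, ((n : R) - j) * binomialTransform a j =
      ∑ l ∈ Finset.range n, ((n + 1).choose (l + 2) : R) * a l := by
  calc ∑ j ∈ Finset.range n, ((n : R) - j) * binomialTransform a j
    _ = ∑ j ∈ Finset.range n, ∑ l ∈ Finset.range n, ((n : R) - j) * j.choose l * a l :=
        Finset.sum_congr rfl fun j hj ↦ by
          simp only [binomialTransform_eq_sum_range a (Finset.mem_range.1 hj), Finset.mul_sum,
            mul_assoc]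
    _ = ∑ l ∈ Finset.range n, ((n + 1).choose (l + 2) : R) * a l := by
        rw [Finset.sum_comm]
        simp only [← Finset.sum_mul, sum_range_sub_mul_choose]

lemma prod_one_sub_mul_eq_sum_powersetCard {ι : Type*} (s : Finset ι) (f : ι → R) (x : R) :
    ∏ i ∈ s, (1 - x * f i) =
      ∑ k ∈ Finset.range (s.card + 1), (-x) ^ k * ∑ S ∈ s.powersetCard k, ∏ i ∈ S, f i := by
  simp only [sub_eq_add_neg, ← neg_mul]
  rw [Finset.prod_one_add, Finset.sum_powerset]
  refine Finset.sum_congr rfl fun k _ ↦ ?_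
  rw [Finset.mul_sum]
  refine Finset.sum_congr rfl fun S hS ↦ ?_
  rw [Finset.prod_mul_distrib, Finset.prod_const, (Finset.mem_powersetCard.1 hS).2]

end BinomialTransform

/-- The product `∏_{i ≤ l} (1 - 2t / (i (i + 1)))` occurring in the closed form of `G n t`. -/
def pgfProd (t : ℝ) (l : ℕ) : ℝ :=
  ∏ i ∈ Finset.Icc 1 l, (1 - 2 * t / ((i : ℝ) * ((i : ℝ) + 1)))

lemma pgfProd_succ (t : ℝ) (l : ℕ) :
    pgfProd t (l + 1) = pgfProd t l * (1 - 2 * t / (((l : ℝ) + 1) * (l + 2))) := by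
  rw [pgfProd, Finset.prod_Icc_succ_top (by lia), ← pgfProd]
  push_cast
  ring_nf

lemma pgfProd_eq_sum_c (t : ℝ) (l : ℕ) :
    pgfProd t l = ∑ k ∈ Finset.range (l + 1), (-t) ^ k * c k l := by
  have h := prod_one_sub_mul_eq_sum_powersetCard (Finset.Icc 1 l)
    (fun i ↦ 2 / ((i : ℝ) * ((i : ℝ) + 1))) t
  rw [Nat.card_Icc, Nat.add_sub_cancel] at h
  rw [pgfProd]
  simp only [c, ← h]
  exact Finset.prod_congr rfl fun i _ ↦ by ring

lemma choose_add_two_mul_div (t : ℝ) (m l : ℕ) :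
    2 * t / (((m : ℝ) + 1) * (m + 2)) * (m + 2).choose (l + 2) =
      m.choose l * (2 * t / (((l : ℝ) + 1) * (l + 2))) := by
  have h₁ : ((m : ℝ) + 2) * (m + 1).choose (l + 1) = (m + 2).choose (l + 2) * (l + 2) :=
    mod_cast Nat.add_one_mul_choose_eq (m + 1) (l + 1)
  have h₂ : ((m : ℝ) + 1) * m.choose l = (m + 1).choose (l + 1) * (l + 1) :=
    mod_cast Nat.add_one_mul_choose_eq m l
  field_simp
  linear_combination (-t * (l + 1)) * h₁ - t * (m + 2) * h₂

lemma binomialTransform_pgfProd_succ (t : ℝ) (m : ℕ) :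
    binomialTransform (fun l ↦ (-1) ^ l * pgfProd t l) (m + 1) =
      2 * t / (((m : ℝ) + 1) * (m + 2)) * ∑ j ∈ Finset.range (m + 1),
        ((m : ℝ) + 1 - j) * binomialTransform (fun l ↦ (-1) ^ l * pgfProd t l) j := by
  have h := sum_range_sub_mul_binomialTransform (fun l ↦ (-1) ^ l * pgfProd t l) (m + 1)
  rw [Nat.cast_add_one] at h
  rw [h, binomialTransform_succ, binomialTransform, Finset.mul_sum]
  refine Finset.sum_congr rfl fun l _ ↦ ?_
  rw [← mul_assoc, choose_add_two_mul_div, pgfProd_succ]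
  ring

lemma eq_binomialTransform_of_recurrence {g : ℕ → ℝ} {t : ℝ} (h_zero : g 0 = 1)
    (h_succ : ∀ m : ℕ, g (m + 1) = 2 * t / (((m : ℝ) + 1) * (m + 2)) *
      ∑ j ∈ Finset.range (m + 1), ((m : ℝ) + 1 - j) * g j) (n : ℕ) :
    g n = binomialTransform (fun l ↦ (-1) ^ l * pgfProd t l) n := by
  induction n using Nat.strong_induction_on with
  | _ n ih =>
    rcases n with _ | m
    · simp [h_zero, binomialTransform, pgfProd]
    · rw [h_succ, binomialTransform_pgfProd_succ]
      congr 1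
      exact Finset.sum_congr rfl fun j hj ↦ by rw [ih j (Finset.mem_range.1 hj)]

lemma binomialTransform_pgfProd_eq_one_add (t : ℝ) (n : ℕ) :
    binomialTransform (fun l ↦ (-1) ^ l * pgfProd t l) n =
      1 + ∑ l ∈ Finset.Icc 1 n, (-1 : ℝ) ^ l * (n.choose l : ℝ) * pgfProd t l := by
  rw [binomialTransform, Finset.range_eq_Ico, Finset.sum_eq_sum_Ico_succ_bot n.succ_pos]
  congr 1
  · simp [pgfProd]
  · exact Finset.sum_congr rfl fun l _ ↦ by ring

lemma binomialTransform_pgfProd_eq_sum_pow (t : ℝ) {n : ℕ} (hn : n ≠ 0) :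
    binomialTransform (fun l ↦ (-1) ^ l * pgfProd t l) n =
      ∑ k ∈ Finset.Icc 1 n, t ^ k *
        ∑ l ∈ Finset.Icc k n, (-1 : ℝ) ^ (l + k) * (n.choose l : ℝ) * c k l := by
  have h_const : ∑ l ∈ Finset.Icc 0 n, (-1 : ℝ) ^ (l + 0) * (n.choose l : ℝ) * c 0 l = 0 := by
    have hc : ∀ l, c 0 l = 1 := by simp [c]
    simp only [hc, add_zero, mul_one, ← Nat.range_succ_eq_Icc_zero]
    exact mod_cast Int.alternating_sum_range_choose_of_ne hn
  calc binomialTransform (fun l ↦ (-1) ^ l * pgfProd t l) n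
    _ = ∑ l ∈ Finset.range (n + 1), ∑ k ∈ Finset.range (l + 1),
          t ^ k * ((-1 : ℝ) ^ (l + k) * (n.choose l : ℝ) * c k l) := by
        simp only [binomialTransform, pgfProd_eq_sum_c, Finset.mul_sum]
        refine Finset.sum_congr rfl fun l _ ↦ Finset.sum_congr rfl fun k _ ↦ ?_
        rw [neg_pow]
        ring
    _ = ∑ k ∈ Finset.Ico 0 (n + 1), ∑ l ∈ Finset.Icc k n,
          t ^ k * ((-1 : ℝ) ^ (l + k) * (n.choose l : ℝ) * c k l) := by
        apply Finset.sum_comm'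
        intro l k
        simp only [Finset.mem_range, Finset.mem_Ico, Finset.mem_Icc]
        lia
    _ = ∑ k ∈ Finset.Icc 1 n, t ^ k *
          ∑ l ∈ Finset.Icc k n, (-1 : ℝ) ^ (l + k) * (n.choose l : ℝ) * c k l := by
        simp only [← Finset.mul_sum]
        rw [Finset.sum_eq_sum_Ico_succ_bot n.succ_pos, h_const, mul_zero, zero_add]
        rfl

section ConvexHull

variable {𝕜 E F : Type*} [Field 𝕜] [LinearOrder 𝕜] [IsStrictOrderedRing 𝕜] [AddCommGroup E]
  [Module 𝕜 E] [AddCommGroup F] [Module 𝕜 F]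

omit [IsStrictOrderedRing 𝕜] in
lemma mem_convexHull_image_iff_of_injective {f : E →ᵃ[𝕜] F} (hf : Function.Injective f) {s : Set E}
    {x : E} : f x ∈ convexHull 𝕜 (f '' s) ↔ x ∈ convexHull 𝕜 s := by
  rw [← AffineMap.image_convexHull, hf.mem_set_image]

lemma notMem_convexHull_of_forall_lt (f : E →ₗ[𝕜] 𝕜) {s : Set E} {a : E}
    (hs : ∀ x ∈ s, f x < f a) : a ∉ convexHull 𝕜 s := fun h ↦
  lt_irrefl _ (convexHull_min hs (convex_halfSpace_lt f.isLinear (f a)) h)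

lemma notMem_convexHull_insert_of_forall_lt (f : E →ₗ[𝕜] 𝕜) {r : 𝕜} {s : Set E} {a b : E}
    (hs : ∀ x ∈ s, r < f x) (ha : f a = r) (hb : f b = r) (hab : a ≠ b) :
    a ∉ convexHull 𝕜 (insert b s) := by
  intro h
  rcases s.eq_empty_or_nonempty with rfl | hne
  · exact hab (by simpa using h)
  rw [convexHull_insert hne, convexJoin_singleton_left, Set.mem_iUnion₂] at h
  obtain ⟨z, hz, u, v, -, hv, huv, rfl⟩ := h
  have hfz : r < f z := convexHull_min hs (convex_halfSpace_gt f.isLinear r) hz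
  have hvz : v * (f z - r) = 0 := by
    simp only [map_add, map_smul, smul_eq_mul, hb] at ha
    linear_combination ha - r * huv
  obtain rfl : v = 0 := (mul_eq_zero.1 hvz).resolve_right (sub_pos.2 hfz).ne'
  obtain rfl : u = 1 := by simpa using huv
  simp at hab

-- A segment from `s` to `t` leaves `{f ≤ r}` through the hyperplane `f = r`, at a point of `s`.
lemma mem_of_mem_convexHull_union_of_le (f : E →ₗ[𝕜] 𝕜) {r : 𝕜} {s t : Set E} (hs : Convex 𝕜 s)
    (ht : Convex 𝕜 t) (hs_ne : s.Nonempty) (ht_ne : t.Nonempty) (hft : ∀ x ∈ t, r ≤ f x)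
    (hr : ∀ x ∈ convexHull 𝕜 (s ∪ t), f x = r → x ∈ s) {x : E} (hx : x ∈ convexHull 𝕜 (s ∪ t))
    (hfx : f x ≤ r) : x ∈ s := by
  rcases hfx.eq_or_lt with hfx | hfx
  · exact hr x hx hfx
  rw [hs.convexHull_union ht hs_ne ht_ne, mem_convexJoin] at hx
  obtain ⟨y, hy, z, hz, u, v, hu, hv, huv, rfl⟩ := hx
  obtain rfl : u = 1 - v := eq_sub_of_add_eq huv
  have hfz := hft z hz
  simp only [map_add, map_smul, smul_eq_mul] at hfx
  have hfy : f y < r := by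
    by_contra! hfy
    nlinarith
  have hd : 0 < f z - f y := by linarith
  obtain ⟨w, hw_pos, hwd⟩ : ∃ w, 0 < w ∧ w * (f z - f y) = r - f y :=
    ⟨(r - f y) / (f z - f y), div_pos (by linarith) hd, div_mul_cancel₀ _ hd.ne'⟩
  have hw_le : w ≤ 1 := by nlinarith
  have hvw : v ≤ w := by nlinarith
  have hcross : (1 - w) • y + w • z ∈ s := by
    refine hr _ ?_ ?_
    · exact convex_convexHull 𝕜 (s ∪ t) (subset_convexHull 𝕜 _ (Or.inl hy))
        (subset_convexHull 𝕜 _ (Or.inr hz)) (sub_nonneg.2 hw_le) hw_pos.le (sub_add_cancel 1 w)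
    · simp only [map_add, map_smul, smul_eq_mul]
      linear_combination hwd
  have hmem := hs hy hcross (sub_nonneg.2 ((div_le_one hw_pos).2 hvw)) (by positivity)
    (sub_add_cancel 1 (v / w))
  convert hmem using 1
  match_scalars <;> field_simp
  ring

end ConvexHull

section TopologicalVectorSpace

variable {E : Type*} [AddCommGroup E] [Module ℝ E] [TopologicalSpace E] [IsTopologicalAddGroup E]
  [ContinuousSMul ℝ E] [T2Space E]

lemma mem_extremePoints_convexHull_iff_of_finite [LocallyConvexSpace ℝ E] {s : Set E}
    (hs : s.Finite) {x : E} :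
    x ∈ (convexHull ℝ s).extremePoints ℝ ↔ x ∈ s ∧ x ∉ convexHull ℝ (s \ {x}) := by
  refine ⟨fun hx ↦ ⟨extremePoints_convexHull_subset hx, fun hx' ↦ ?_⟩, fun ⟨hxs, hx⟩ ↦ ?_⟩
  · rw [(convex_convexHull ℝ s).mem_extremePoints_iff_mem_sdiff_convexHull_sdiff] at hx
    exact hx.2 (convexHull_mono (Set.sdiff_subset_sdiff_left (subset_convexHull ℝ s)) hx')
  · by_contra hext
    -- By Krein–Milman, `x` would be a convex combination of the extreme points.
    have hsub : (convexHull ℝ s).extremePoints ℝ ⊆ s \ {x} := fun y hy ↦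
      ⟨extremePoints_convexHull_subset hy, fun hyx ↦ hext (hyx ▸ hy)⟩
    have hKM := closure_convexHull_extremePoints (hs.isCompact_convexHull (𝕜 := ℝ))
      (convex_convexHull ℝ s)
    rw [((hs.subset extremePoints_convexHull_subset).isClosed_convexHull (𝕜 := ℝ)).closure_eq]
      at hKM
    exact hx (convexHull_mono hsub (hKM.ge (subset_convexHull ℝ s hxs)))

omit [IsTopologicalAddGroup E] [ContinuousSMul ℝ E] [T2Space E] [TopologicalSpace E] in
lemma convexHull_range_eq_image_stdSimplex {κ : Type*} [Fintype κ] (f : κ → E) :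
    convexHull ℝ (Set.range f) = Fintype.linearCombination ℝ f '' stdSimplex ℝ κ := by
  classical
  rw [← convexHull_rangle_single_eq_stdSimplex, LinearMap.image_convexHull, ← Set.range_comp]
  congr 2
  ext k
  simp

lemma isClosed_setOf_mem_convexHull_range {X κ : Type*} [TopologicalSpace X] [Finite κ]
    {f : X → κ → E} {g : X → E} (hf : Continuous f) (hg : Continuous g) :
    IsClosed {x | g x ∈ convexHull ℝ (Set.range (f x))} := by
  have := Fintype.ofFinite κ
  have : CompactSpace (stdSimplex ℝ κ) := isCompact_iff_compactSpace.1 (isCompact_stdSimplex ℝ κ)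
  have hclosed : IsClosed
      {z : stdSimplex ℝ κ × X | Fintype.linearCombination ℝ (f z.2) z.1 = g z.2} := by
    refine isClosed_eq ?_ (by fun_prop)
    simp only [Fintype.linearCombination_apply]
    exact continuous_finsetSum _ fun k _ ↦
      ((continuous_apply k).comp (continuous_subtype_val.comp continuous_fst)).smul
        ((continuous_apply k).comp (hf.comp continuous_snd))
  convert isClosedMap_snd_of_compactSpace _ hclosed using 1
  ext x
  simp only [convexHull_range_eq_image_stdSimplex, Set.mem_image, Set.mem_ofPred_eq, Prod.exists,
    exists_eq_right, Subtype.exists]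
  exact ⟨fun ⟨w, hw, h⟩ ↦ ⟨w, hw, h⟩, fun ⟨w, hw, h⟩ ↦ ⟨w, hw, h⟩⟩

end TopologicalVectorSpace

/-- The interior of `T`. -/
def openTriangle : Set (ℝ × ℝ) := {q | 0 < q.1 ∧ 0 < q.2 ∧ q.1 + q.2 < 1}

/-- The abscissa of the point at which the line through `(0, 1)` and `q` meets the horizontal axis.
Ordering points by it sweeps `T` by rotating a line about `(0, 1)`. -/
def centralProj (q : ℝ × ℝ) : ℝ := q.1 / (1 - q.2)

/-- The affine map taking the triangle with vertices `(a (1 - h), h)`, `(1, 0)`, `(a, 0)` to `T`,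
vertices being matched with `(0, 1)`, `(1, 0)`, `(0, 0)` in this order. -/
def triangleMap (a h : ℝ) : (ℝ × ℝ) →ᵃ[ℝ] (ℝ × ℝ) :=
  (Matrix.toLin (Module.Basis.finTwoProd ℝ) (Module.Basis.finTwoProd ℝ)
    !![(1 - a)⁻¹, a * (1 - a)⁻¹; 0, h⁻¹]).toAffineMap +
      AffineMap.const ℝ (ℝ × ℝ) (-a * (1 - a)⁻¹, 0)

/-- The open triangle with vertices `(a (1 - h), h)`, `(1, 0)`, `(a, 0)`. Its apex lies on the line
through `(0, 1)` and `(a, 0)`. -/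
def cutTriangle (a h : ℝ) : Set (ℝ × ℝ) := triangleMap a h ⁻¹' openTriangle

section TriangleMap

variable {a h : ℝ}

lemma triangleMap_apply (a h : ℝ) (q : ℝ × ℝ) :
    triangleMap a h q = ((q.1 - a * (1 - q.2)) / (1 - a), q.2 / h) := by
  ext <;>
  simp only [triangleMap, AffineMap.coe_add, LinearMap.coe_toAffineMap, AffineMap.coe_const,
    Pi.add_apply, Matrix.toLin_finTwoProd_apply, Function.const_apply, Prod.mk_add_mk] <;>
  ring

lemma det_linear_triangleMap (a h : ℝ) :
    LinearMap.det (triangleMap a h).linear = ((1 - a) * h)⁻¹ := by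
  simp [triangleMap, LinearMap.det_toLin, Matrix.det_fin_two_of, mul_comm]

lemma triangleMap_apex (hh : 0 < h) : triangleMap a h (a * (1 - h), h) = (0, 1) := by
  simp [triangleMap_apply, hh.ne']

lemma triangleMap_right (ha : a < 1) : triangleMap a h (1, 0) = (1, 0) := by
  simp [triangleMap_apply, (sub_pos.2 ha).ne']

lemma triangleMap_top : triangleMap a h (0, 1) = (0, h⁻¹) := by
  simp [triangleMap_apply]

lemma triangleMap_injective (ha : a < 1) (hh : 0 < h) : Function.Injective (triangleMap a h) := by
  rintro ⟨x, y⟩ ⟨x', y'⟩ heq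
  simp only [triangleMap_apply, Prod.mk.injEq, div_left_inj' hh.ne',
    div_left_inj' (sub_pos.2 ha).ne'] at heq
  obtain ⟨hx, rfl⟩ := heq
  simpa using hx

lemma mem_cutTriangle_iff (ha : a < 1) (hh : 0 < h) {q : ℝ × ℝ} :
    q ∈ cutTriangle a h ↔
      a * (1 - q.2) < q.1 ∧ 0 < q.2 ∧ (q.1 - a * (1 - q.2)) * h + (1 - a) * q.2 < (1 - a) * h := by
  have ha' := sub_pos.2 ha
  simp only [cutTriangle, openTriangle, Set.mem_preimage, triangleMap_apply, Set.mem_ofPred_eq]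
  rw [div_pos_iff_of_pos_right ha', div_pos_iff_of_pos_right hh, sub_pos,
    div_add_div _ _ ha'.ne' hh.ne', div_lt_one (mul_pos ha' hh)]

lemma cutTriangle_subset_cutTriangle (ha : a < 1) (hh : 0 < h) {h' : ℝ} (hh' : h ≤ h') :
    cutTriangle a h ⊆ cutTriangle a h' := by
  intro q hq
  rw [mem_cutTriangle_iff ha (hh.trans_le hh')]
  rw [mem_cutTriangle_iff ha hh] at hq
  obtain ⟨hq₁, hq₂, hq₃⟩ := hq
  refine ⟨hq₁, hq₂, ?_⟩
  have hlt : q.1 - a * (1 - q.2) < 1 - a := by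
    by_contra! hle
    nlinarith [mul_pos (sub_pos.2 ha) hq₂]
  nlinarith

lemma cutTriangle_one (ha₀ : 0 ≤ a) (ha : a < 1) :
    cutTriangle a 1 = openTriangle ∩ {q | a < centralProj q} := by
  ext q
  rw [mem_cutTriangle_iff ha one_pos]
  simp only [openTriangle, centralProj, Set.mem_inter_iff, Set.mem_ofPred_eq]
  constructor
  · rintro ⟨hq₁, hq₂, hq₃⟩
    have hlt : q.2 < 1 := by nlinarith
    have hpos : 0 ≤ a * (1 - q.2) := mul_nonneg ha₀ (sub_nonneg.2 hlt.le)
    exact ⟨⟨by linarith, hq₂, by linarith⟩, (lt_div_iff₀ (sub_pos.2 hlt)).2 hq₁⟩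
  · rintro ⟨⟨hq₁, hq₂, hq₃⟩, hq⟩
    rw [lt_div_iff₀ (by linarith)] at hq
    exact ⟨hq, hq₂, by linarith⟩

lemma cutTriangle_subset_openTriangle (ha₀ : 0 ≤ a) (ha : a < 1) (hh : 0 < h) (hh₁ : h ≤ 1) :
    cutTriangle a h ⊆ openTriangle :=
  (cutTriangle_subset_cutTriangle ha hh hh₁).trans
    ((cutTriangle_one ha₀ ha).trans_subset Set.inter_subset_left)

lemma centralProj_mem_Ioo {p : ℝ × ℝ} (hp : p ∈ openTriangle) : centralProj p ∈ Set.Ioo 0 1 := by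
  obtain ⟨hp₁, _, hp₃⟩ := hp
  have hp₂' : 0 < 1 - p.2 := by linarith
  exact ⟨div_pos hp₁ hp₂', (div_lt_one hp₂').2 (by linarith)⟩

lemma eq_mk_centralProj_mul {p : ℝ × ℝ} (hp : p ∈ openTriangle) :
    p = (centralProj p * (1 - p.2), p.2) := by
  have hp₂ : 1 - p.2 ≠ 0 := by linarith [hp.1, hp.2.2]
  rw [centralProj, div_mul_cancel₀ _ hp₂]

end TriangleMap

section Corner

variable {h : ℝ}

lemma mem_convexHull_corner (hh₀ : 0 < h) (hh : h < 1) {u : ℝ × ℝ} (hu₁ : 0 ≤ u.1)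
    (hu_ge : 1 ≤ u.1 + u.2) (hu_le : u.1 + h * u.2 ≤ 1) :
    u ∈ convexHull ℝ {(1, 0), (0, 1), (0, h⁻¹)} := by
  have hh' : 0 < 1 - h := sub_pos.2 hh
  set w := (u.1 + u.2 - 1) * h / (1 - h) with hw
  have hw_nonneg : 0 ≤ w := div_nonneg (mul_nonneg (by linarith) hh₀.le) hh'.le
  have hw_le : 0 ≤ 1 - u.1 - w := by
    rw [sub_nonneg, hw, div_le_iff₀ hh']
    linarith
  have hmem := (convex_convexHull ℝ {((1, 0) : ℝ × ℝ), (0, 1), (0, h⁻¹)}).sum_mem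
    (t := Finset.univ) (w := ![u.1, 1 - u.1 - w, w]) (z := ![(1, 0), (0, 1), (0, h⁻¹)])
    (by simp [Fin.forall_fin_succ, hu₁, hw_nonneg, hw_le])
    (by simp only [Fin.sum_univ_three, Matrix.cons_val]; ring)
    (fun i _ ↦ subset_convexHull ℝ _ (by fin_cases i <;> simp))
  convert hmem using 1
  ext
  · simp [Fin.sum_univ_three]
  · simp only [Fin.sum_univ_three, Matrix.cons_val, Prod.snd_add, Prod.smul_snd, smul_eq_mul, hw]
    field_simp
    ring

lemma mem_of_fst_add_snd_eq_one {K : Set (ℝ × ℝ)} (hK : Convex ℝ K) (hA : (1, 0) ∈ K)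
    (hB : (0, 1) ∈ K) {u : ℝ × ℝ} (hu₁ : 0 ≤ u.1) (hu₂ : 0 ≤ u.2) (hu : u.1 + u.2 = 1) :
    u ∈ K := by
  convert hK hA hB hu₁ hu₂ hu using 1
  ext <;> simp

lemma convex_quadrant : Convex ℝ {u : ℝ × ℝ | 0 ≤ u.1 ∧ 0 ≤ u.2} :=
  (convex_halfSpace_ge (LinearMap.fst ℝ ℝ ℝ).isLinear 0).inter
    (convex_halfSpace_ge (LinearMap.snd ℝ ℝ ℝ).isLinear 0)

-- The added triangle with vertices `(1, 0)`, `(0, 1)`, `(0, h⁻¹)` is separated from `s` by the line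
-- through `(1, 0)` and `(0, 1)`, whose part in the quadrant is already contained in the hull.
lemma mem_convexHull_of_mem_convexHull_union_corner (hh₀ : 0 < h) (hh : h < 1) {s : Set (ℝ × ℝ)}
    (hs : s ⊆ {u | 0 ≤ u.1 ∧ 0 ≤ u.2}) {v : ℝ × ℝ} (hv : v.1 + v.2 ≤ 1)
    (hmem : v ∈ convexHull ℝ (convexHull ℝ (s ∪ {(1, 0), (0, 1)}) ∪
      convexHull ℝ {(1, 0), (0, 1), (0, h⁻¹)})) :
    v ∈ convexHull ℝ (s ∪ {(1, 0), (0, 1)}) := by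
  have hA : ((1, 0) : ℝ × ℝ) ∈ convexHull ℝ (s ∪ {(1, 0), (0, 1)}) :=
    subset_convexHull ℝ _ (by simp)
  have hB : ((0, 1) : ℝ × ℝ) ∈ convexHull ℝ (s ∪ {(1, 0), (0, 1)}) :=
    subset_convexHull ℝ _ (by simp)
  have h_quadrant : convexHull ℝ (convexHull ℝ (s ∪ {(1, 0), (0, 1)}) ∪
      convexHull ℝ {(1, 0), (0, 1), (0, h⁻¹)}) ⊆ {u | 0 ≤ u.1 ∧ 0 ≤ u.2} := by
    refine convexHull_min (Set.union_subset (convexHull_min (Set.union_subset hs ?_)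
      convex_quadrant) (convexHull_min ?_ convex_quadrant)) convex_quadrant
    · rintro u (rfl | rfl) <;> simp
    · rintro u (rfl | rfl | rfl) <;> simp [hh₀.le]
  have h_corner : convexHull ℝ {((1, 0) : ℝ × ℝ), (0, 1), (0, h⁻¹)} ⊆ {u | 1 ≤ u.1 + u.2} := by
    refine convexHull_min ?_
      (convex_halfSpace_ge (LinearMap.fst ℝ ℝ ℝ + LinearMap.snd ℝ ℝ ℝ).isLinear 1)
    rintro u (rfl | rfl | rfl) <;> simp [(one_le_inv₀ hh₀).2 hh.le]
  exact mem_of_mem_convexHull_union_of_le (LinearMap.fst ℝ ℝ ℝ + LinearMap.snd ℝ ℝ ℝ)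
    (convex_convexHull ℝ _) (convex_convexHull ℝ _) ⟨_, hA⟩
    ⟨(1, 0), subset_convexHull ℝ _ (by simp)⟩ (fun x hx ↦ h_corner hx)
    (fun x hx hx₁ ↦ mem_of_fst_add_snd_eq_one (convex_convexHull ℝ _) hA hB (h_quadrant hx).1
      (h_quadrant hx).2 hx₁) hmem hv

lemma mem_convexHull_insert_iff_of_corner (hh₀ : 0 < h) (hh : h < 1) {s : Set (ℝ × ℝ)}
    (hs : s ⊆ {u | 0 < u.1 ∧ 0 < u.2 ∧ u.1 + h * u.2 < 1}) {v : ℝ × ℝ}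
    (hv : v ∈ {u : ℝ × ℝ | 0 < u.1 ∧ 0 < u.2 ∧ u.1 + h * u.2 < 1}) :
    v ∈ convexHull ℝ (insert (0, 1) s ∪ {(1, 0), (0, h⁻¹)}) ↔
      (v ∈ openTriangle → v ∈ convexHull ℝ (s ∩ openTriangle ∪ {(1, 0), (0, 1)})) := by
  have mem_corner : ∀ u ∈ {u : ℝ × ℝ | 0 < u.1 ∧ 0 < u.2 ∧ u.1 + h * u.2 < 1},
      u ∉ openTriangle → u ∈ convexHull ℝ {(1, 0), (0, 1), (0, h⁻¹)} := by
    rintro u ⟨hu₁, hu₂, hu₃⟩ hu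
    refine mem_convexHull_corner hh₀ hh hu₁.le ?_ hu₃.le
    by_contra! hlt
    exact hu ⟨hu₁, hu₂, hlt⟩
  constructor
  · intro hmem hvT
    refine mem_convexHull_of_mem_convexHull_union_corner hh₀ hh
      (fun u hu ↦ ⟨(hs hu.1).1.le, (hs hu.1).2.1.le⟩) hvT.2.2.le (convexHull_mono ?_ hmem)
    rintro u ((rfl | hu) | rfl | rfl)
    · exact Or.inr (subset_convexHull ℝ _ (by simp))
    · by_cases huT : u ∈ openTriangle
      · exact Or.inl (subset_convexHull ℝ _ (Or.inl ⟨hu, huT⟩))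
      · exact Or.inr (mem_corner u (hs hu) huT)
    · exact Or.inr (subset_convexHull ℝ _ (by simp))
    · exact Or.inr (subset_convexHull ℝ _ (by simp))
  · intro himp
    by_cases hvT : v ∈ openTriangle
    · refine convexHull_mono ?_ (himp hvT)
      rintro u (hu | rfl | rfl)
      · exact Or.inl (Or.inr hu.1)
      · simp
      · simp
    · refine convexHull_mono ?_ (mem_corner v hv hvT)
      rintro u (rfl | rfl | rfl) <;> simp

end Corner

/-- The `i`-th point is a vertex of the convex chain spanned by `ω`, `(1, 0)` and `(0, 1)`. The
index set is arbitrary because the recursion passes to subfamilies of the points. -/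
def IsChainVertex {ι : Type*} (ω : ι → ℝ × ℝ) (i : ι) : Prop :=
  ω i ∉ convexHull ℝ (ω '' {i}ᶜ ∪ {(1, 0), (0, 1)})

/-- The number of indices whose points are vertices of the convex chain. For distinct points inside
the triangle it is `N`, without the truncated subtraction. -/
def chainVertexCount {ι : Type*} (ω : ι → ℝ × ℝ) : ℕ := {i | IsChainVertex ω i}.ncard

section ChainVertex

variable {ι κ : Type*}

lemma isChainVertex_comp_equiv (e : ι ≃ κ) (ω : κ → ℝ × ℝ) (i : ι) :
    IsChainVertex (ω ∘ e) i ↔ IsChainVertex ω (e i) := by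
  rw [IsChainVertex, IsChainVertex, Set.image_comp, Set.image_compl_eq e.bijective,
    Set.image_singleton, Function.comp_apply]

lemma chainVertexCount_comp_equiv (e : ι ≃ κ) (ω : κ → ℝ × ℝ) :
    chainVertexCount (ω ∘ e) = chainVertexCount ω := by
  simp only [chainVertexCount, isChainVertex_comp_equiv]
  exact Set.ncard_preimage_of_injective_subset_range (s := {i | IsChainVertex ω i}) e.injective
    (by simp)

lemma chainVertexCount_le_card [Finite ι] (ω : ι → ℝ × ℝ) : chainVertexCount ω ≤ Nat.card ι :=
  Set.ncard_le_card _

lemma measurableSet_isChainVertex [Finite ι] (i : ι) :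
    MeasurableSet {ω : ι → ℝ × ℝ | IsChainVertex ω i} := by
  have hclosed := isClosed_setOf_mem_convexHull_range (X := ι → ℝ × ℝ)
    (f := fun ω ↦ Sum.elim (fun k : ({i}ᶜ : Set ι) ↦ ω k)
      ((↑) : ({(1, 0), (0, 1)} : Set (ℝ × ℝ)) → ℝ × ℝ))
    (g := fun ω ↦ ω i)
    (continuous_pi fun k ↦ by rcases k with k | k <;> simp only [Sum.elim_inl, Sum.elim_inr] <;>
      fun_prop) (by fun_prop)
  simp only [Set.Sum.elim_range, Subtype.range_coe, ← Set.image_eq_range] at hclosed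
  exact hclosed.measurableSet.compl

lemma measurable_chainVertexCount [Finite ι] :
    Measurable (chainVertexCount : (ι → ℝ × ℝ) → ℕ) := by
  classical
  have := Fintype.ofFinite ι
  have h : (chainVertexCount : (ι → ℝ × ℝ) → ℕ) =
      fun ω ↦ ∑ i, if IsChainVertex ω i then 1 else 0 := by
    ext ω
    rw [chainVertexCount, Set.ncard_eq_toFinset_card', Set.toFinset_ofPred, Finset.card_filter]
  rw [h]
  exact Finset.measurable_sum _ fun i _ ↦
    Measurable.ite (measurableSet_isChainVertex i) measurable_const measurable_const

end ChainVertex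

section InsertNth

variable {α : Type*} {m : ℕ}

lemma insertNth_image_compl_self (i : Fin (m + 1)) (p : α) (ω : Fin m → α) :
    (i.insertNth p ω : Fin (m + 1) → α) '' {i}ᶜ = Set.range ω := by
  rw [← Fin.range_succAbove, ← Set.range_comp, Fin.insertNth_comp_succAbove]

lemma insertNth_image_compl_succAbove (i : Fin (m + 1)) (p : α) (ω : Fin m → α) (j : Fin m) :
    (i.insertNth p ω : Fin (m + 1) → α) '' {i.succAbove j}ᶜ = insert p (ω '' {j}ᶜ) := by
  have h : ({i.succAbove j}ᶜ : Set (Fin (m + 1))) = insert i (i.succAbove '' {j}ᶜ) := by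
    ext k
    induction k using i.succAboveCases <;> simp [i.succAbove_ne]
  rw [h, Set.image_insert_eq, Fin.insertNth_apply_same, ← Set.image_comp,
    Fin.insertNth_comp_succAbove]

end InsertNth

section Recursion

variable {a h : ℝ} {m : ℕ} {p : ℝ × ℝ} {ω : Fin m → ℝ × ℝ}

lemma mem_convexHull_union_corners_iff (ha : a < 1) (hh : 0 < h) {s : Set (ℝ × ℝ)} {v : ℝ × ℝ} :
    v ∈ convexHull ℝ (s ∪ {(1, 0), (0, 1)}) ↔
      triangleMap a h v ∈ convexHull ℝ (triangleMap a h '' s ∪ {(1, 0), (0, h⁻¹)}) := by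
  rw [← mem_convexHull_image_iff_of_injective (triangleMap_injective ha hh), Set.image_union,
    Set.image_pair, triangleMap_right ha, triangleMap_top]

lemma triangleMap_mem_of_mem_cutTriangle_one (hh : 0 < h) {q : ℝ × ℝ} (hq : q ∈ cutTriangle a 1) :
    triangleMap a h q ∈ {u | 0 < u.1 ∧ 0 < u.2 ∧ u.1 + h * u.2 < 1} := by
  obtain ⟨h₁, h₂, h₃⟩ := hq
  simp only [triangleMap_apply, div_one] at h₁ h₂ h₃
  simp only [triangleMap_apply, Set.mem_ofPred_eq]
  exact ⟨h₁, div_pos h₂ hh, by rwa [mul_div_cancel₀ _ hh.ne']⟩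

lemma triangleMap_centralProj_self (hp : p ∈ openTriangle) :
    triangleMap (centralProj p) p.2 p = (0, 1) := by
  have h_apex := triangleMap_apex (a := centralProj p) hp.2.1
  rwa [← eq_mk_centralProj_mul hp] at h_apex

lemma isChainVertex_insertNth_self (i : Fin (m + 1)) (hp : p ∈ openTriangle)
    (hω : ∀ j, ω j ∈ cutTriangle (centralProj p) 1) :
    IsChainVertex (i.insertNth p ω : Fin (m + 1) → ℝ × ℝ) i := by
  rw [IsChainVertex, Fin.insertNth_apply_same, insertNth_image_compl_self,
    mem_convexHull_union_corners_iff (centralProj_mem_Ioo hp).2 hp.2.1,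
    triangleMap_centralProj_self hp, Set.insert_eq, ← Set.union_assoc, Set.union_singleton]
  refine notMem_convexHull_insert_of_forall_lt (LinearMap.fst ℝ ℝ ℝ) (r := 0) ?_ rfl rfl ?_
  · rintro _ (⟨_, ⟨j, rfl⟩, rfl⟩ | rfl)
    · exact (triangleMap_mem_of_mem_cutTriangle_one hp.2.1 (hω j)).1
    · simp
  · have hp₂ : p.2 < 1 := by linarith [hp.1, hp.2.2]
    simpa [Prod.ext_iff, eq_comm] using hp₂.ne

lemma isChainVertex_insertNth_succAbove_iff (i : Fin (m + 1)) (hp : p ∈ openTriangle)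
    (hω : ∀ j, ω j ∈ cutTriangle (centralProj p) 1) {J : Finset (Fin m)}
    (hJ : ∀ j, j ∈ J ↔ ω j ∈ cutTriangle (centralProj p) p.2) (j : Fin m) :
    IsChainVertex (i.insertNth p ω : Fin (m + 1) → ℝ × ℝ) (i.succAbove j) ↔
      ∃ hj : j ∈ J, IsChainVertex (fun k : J ↦ triangleMap (centralProj p) p.2 (ω k)) ⟨j, hj⟩ := by
  set f := triangleMap (centralProj p) p.2
  have hf : ∀ k, f (ω k) ∈ {u : ℝ × ℝ | 0 < u.1 ∧ 0 < u.2 ∧ u.1 + p.2 * u.2 < 1} := fun k ↦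
    triangleMap_mem_of_mem_cutTriangle_one hp.2.1 (hω k)
  have h_image (hj : j ∈ J) : (fun k : J ↦ f (ω k)) '' {⟨j, hj⟩}ᶜ =
      f '' (ω '' {j}ᶜ) ∩ openTriangle := by
    ext u
    simp only [Set.mem_image, Set.mem_compl_iff, Set.mem_singleton_iff, Subtype.exists,
      Subtype.mk.injEq, Set.mem_inter_iff, exists_exists_and_eq_and]
    constructor
    · rintro ⟨k, hk, hkj, rfl⟩
      exact ⟨⟨k, hkj, rfl⟩, (hJ k).1 hk⟩
    · rintro ⟨⟨k, hkj, rfl⟩, hk⟩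
      exact ⟨k, (hJ k).2 hk, hkj, rfl⟩
  have hp₂ : p.2 < 1 := by linarith [hp.1, hp.2.2]
  rw [IsChainVertex, Fin.insertNth_apply_succAbove, insertNth_image_compl_succAbove,
    mem_convexHull_union_corners_iff (centralProj_mem_Ioo hp).2 hp.2.1, Set.image_insert_eq,
    triangleMap_centralProj_self hp, mem_convexHull_insert_iff_of_corner hp.2.1 hp₂
      (by rintro _ ⟨_, ⟨k, -, rfl⟩, rfl⟩; exact hf k) (hf j), Classical.not_imp]
  simp only [IsChainVertex, h_image, ← exists_prop]
  exact exists_prop_congr (fun _ ↦ Iff.rfl) (hJ j).symm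

lemma chainVertexCount_insertNth (i : Fin (m + 1)) (hp : p ∈ openTriangle)
    (hω : ∀ j, ω j ∈ cutTriangle (centralProj p) 1) {J : Finset (Fin m)}
    (hJ : ∀ j, j ∈ J ↔ ω j ∈ cutTriangle (centralProj p) p.2) :
    chainVertexCount (i.insertNth p ω : Fin (m + 1) → ℝ × ℝ) =
      chainVertexCount (fun k : J ↦ triangleMap (centralProj p) p.2 (ω k)) + 1 := by
  have h_set : {k | IsChainVertex (i.insertNth p ω : Fin (m + 1) → ℝ × ℝ) k} =
      insert i ((i.succAbove ∘ Subtype.val) ''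
        {k | IsChainVertex (fun k : J ↦ triangleMap (centralProj p) p.2 (ω k)) k}) := by
    ext k
    induction k using i.succAboveCases with
    | x => simpa using isChainVertex_insertNth_self i hp hω
    | p j =>
      simp [isChainVertex_insertNth_succAbove_iff i hp hω hJ, i.succAbove_ne]
  rw [chainVertexCount, h_set, Set.ncard_insert_of_notMem (by simp [i.succAbove_ne]),
    Set.ncard_image_of_injective _ (i.succAbove_right_injective.comp Subtype.val_injective)]
  rfl

end Recursion

section VertexNumber

variable {n : ℕ} {ω : Fin n → ℝ × ℝ}

lemma notMem_corners_of_mem_openTriangle {q : ℝ × ℝ} (hq : q ∈ openTriangle) :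
    q ∉ ({(1, 0), (0, 1)} : Set (ℝ × ℝ)) := by
  rintro (rfl | rfl) <;> simp [openTriangle] at hq

lemma range_union_corners_sdiff_singleton (h_inj : Function.Injective ω)
    (hω : ∀ i, ω i ∈ openTriangle) (i : Fin n) :
    (Set.range ω ∪ {(1, 0), (0, 1)}) \ {ω i} = ω '' {i}ᶜ ∪ {(1, 0), (0, 1)} := by
  have h_corner : ω i ∉ ({(1, 0), (0, 1)} : Set (ℝ × ℝ)) :=
    notMem_corners_of_mem_openTriangle (hω i)
  rw [Set.union_sdiff_distrib, Set.sdiff_singleton_eq_self h_corner, ← Set.image_univ,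
    Set.compl_eq_univ_sdiff, Set.image_sdiff h_inj, Set.image_singleton]

lemma extremePoints_Tchain (h_inj : Function.Injective ω) (hω : ∀ i, ω i ∈ openTriangle) :
    (Tchain n ω).extremePoints ℝ = ω '' {i | IsChainVertex ω i} ∪ {(1, 0), (0, 1)} := by
  have h_right : ((1, 0) : ℝ × ℝ) ∉
      convexHull ℝ ((Set.range ω ∪ {(1, 0), (0, 1)}) \ {(1, 0)}) := by
    refine notMem_convexHull_of_forall_lt (LinearMap.fst ℝ ℝ ℝ) ?_
    rintro _ ⟨⟨i, rfl⟩ | rfl | rfl, hne⟩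
    · simpa using (by linarith [(hω i).2.1, (hω i).2.2] : (ω i).1 < 1)
    · simp at hne
    · simp
  have h_top : ((0, 1) : ℝ × ℝ) ∉
      convexHull ℝ ((Set.range ω ∪ {(1, 0), (0, 1)}) \ {(0, 1)}) := by
    refine notMem_convexHull_of_forall_lt (LinearMap.snd ℝ ℝ ℝ) ?_
    rintro _ ⟨⟨i, rfl⟩ | rfl | rfl, hne⟩
    · simpa using (by linarith [(hω i).1, (hω i).2.2] : (ω i).2 < 1)
    · simp
    · simp at hne
  have h_point (i : Fin n) : ω i ∈ (Tchain n ω).extremePoints ℝ ↔ IsChainVertex ω i := by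
    rw [Tchain, mem_extremePoints_convexHull_iff_of_finite (Set.toFinite _),
      range_union_corners_sdiff_singleton h_inj hω]
    simp [IsChainVertex]
  have h_sub : (Tchain n ω).extremePoints ℝ ⊆ Set.range ω ∪ {(1, 0), (0, 1)} :=
    extremePoints_convexHull_subset
  ext x
  constructor
  · intro hx
    rcases h_sub hx with ⟨i, rfl⟩ | hx'
    · exact Or.inl ⟨i, (h_point i).1 hx, rfl⟩
    · exact Or.inr hx'
  · rintro (⟨i, hi, rfl⟩ | rfl | rfl)
    · exact (h_point i).2 hi
    · exact (mem_extremePoints_convexHull_iff_of_finite (Set.toFinite _)).2 ⟨by simp, h_right⟩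
    · exact (mem_extremePoints_convexHull_iff_of_finite (Set.toFinite _)).2 ⟨by simp, h_top⟩

lemma N_eq_chainVertexCount (h_inj : Function.Injective ω) (hω : ∀ i, ω i ∈ openTriangle) :
    N n ω = chainVertexCount ω := by
  have h_disj : Disjoint (ω '' {i | IsChainVertex ω i}) {(1, 0), (0, 1)} := by
    rw [Set.disjoint_left]
    rintro _ ⟨i, -, rfl⟩
    exact notMem_corners_of_mem_openTriangle (hω i)
  rw [N, extremePoints_Tchain h_inj hω, Set.ncard_union_eq h_disj,
    Set.ncard_image_of_injective _ h_inj, Set.ncard_pair (by simp), Nat.add_sub_cancel,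
    chainVertexCount]

end VertexNumber

section Beta

lemma integral_pow_mul_one_sub_pow (j k : ℕ) :
    ∫ x in (0 : ℝ)..1, x ^ j * (1 - x) ^ k =
      (j.factorial * k.factorial : ℝ) / ((j + k + 1).factorial : ℝ) := by
  have h_cast : ((∫ x in (0 : ℝ)..1, x ^ j * (1 - x) ^ k : ℝ) : ℂ) =
      Complex.betaIntegral (j + 1) (k + 1) := by
    simp [Complex.betaIntegral, ← intervalIntegral.integral_ofReal]
  have h_gamma := Complex.Gamma_mul_Gamma_eq_betaIntegral (s := j + 1) (t := k + 1)
    (by simpa using by positivity) (by simpa using by positivity)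
  have h_add : (j + 1 + (k + 1) : ℂ) = ((j + k + 1 : ℕ) : ℂ) + 1 := by push_cast; ring
  rw [h_add, Complex.Gamma_nat_eq_factorial, Complex.Gamma_nat_eq_factorial,
    Complex.Gamma_nat_eq_factorial, ← h_cast] at h_gamma
  rw [eq_div_iff (by positivity), mul_comm]
  exact_mod_cast h_gamma.symm

end Beta

section AddHaar

variable {E : Type*} [NormedAddCommGroup E] [NormedSpace ℝ E] [MeasurableSpace E] [BorelSpace E]
  [FiniteDimensional ℝ E] (μ : Measure E) [μ.IsAddHaarMeasure]

lemma addHaar_setOf_linearMap_eq {f : E →ₗ[ℝ] ℝ} (hf : f ≠ 0) (r : ℝ) : μ {x | f x = r} = 0 := by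
  have h := Measure.addHaar_affineSubspace μ
    ((AffineSubspace.mk' r (⊥ : Submodule ℝ ℝ)).comap f.toAffineMap) fun h_top ↦ hf ?_
  · simpa [Set.preimage, AffineSubspace.mem_mk', sub_eq_zero] using h
  · have h_eq (x : E) : f x = r := by
      have hx : x ∈ (AffineSubspace.mk' r (⊥ : Submodule ℝ ℝ)).comap f.toAffineMap :=
        h_top ▸ AffineSubspace.mem_top ℝ E x
      simpa [AffineSubspace.mem_mk', sub_eq_zero] using hx
    ext x
    rw [h_eq, ← h_eq 0, map_zero, LinearMap.zero_apply]

lemma map_affineMap_addHaar_eq_smul_addHaar {f : E →ᵃ[ℝ] E} (hf : LinearMap.det f.linear ≠ 0) :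
    μ.map f = ENNReal.ofReal |(LinearMap.det f.linear)⁻¹| • μ := by
  have h_comp : ⇑f = (· + f 0) ∘ f.linear := by
    ext x
    rw [f.decomp]
    simp
  rw [h_comp, ← Measure.map_map (measurable_add_const _)
      f.linear.continuous_of_finiteDimensional.measurable,
    Measure.map_linearMap_addHaar_eq_smul_addHaar μ hf, Measure.map_smul, map_add_right_eq_self]

end AddHaar

section Pi

variable {X E : Type*} [MeasurableSpace X] [NormedAddCommGroup E] [NormedSpace ℝ E]
  {μ : Measure X}

lemma ae_injective_comp_pi {ι β : Type*} [Fintype ι] [MeasurableSpace β] [MeasurableEq β]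
    [SigmaFinite μ] {r : X → β} (hr : Measurable r) (h_null : ∀ b, μ (r ⁻¹' {b}) = 0) :
    ∀ᵐ ω ∂Measure.pi fun _ : ι ↦ μ, Function.Injective (r ∘ ω) := by
  classical
  suffices h : ∀ i j, i ≠ j → ∀ᵐ ω ∂Measure.pi fun _ : ι ↦ μ, r (ω i) ≠ r (ω j) by
    simp only [← ae_all_iff] at h
    filter_upwards [h] with ω hω i j hij
    by_contra hne
    exact hω i j hne hij
  intro i j hij
  refine (measurePreserving_piEquivPiSubtypeProd (fun _ : ι ↦ μ) (· = i)).quasiMeasurePreserving.ae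
    (p := fun z ↦ r (z.1 ⟨i, rfl⟩) ≠ r (z.2 ⟨j, hij.symm⟩)) ?_
  rw [Measure.ae_prod_iff_ae_ae]
  · refine Filter.Eventually.of_forall fun ω ↦
      (Measure.quasiMeasurePreserving_eval (fun _ ↦ μ) (⟨j, hij.symm⟩ : {k // k ≠ i})).ae
      (p := fun x ↦ r (ω ⟨i, rfl⟩) ≠ r x) ?_
    simpa [ae_iff, Set.preimage, eq_comm] using h_null (r (ω ⟨i, rfl⟩))
  · exact (measurableSet_eq_fun (by fun_prop) (by fun_prop)).compl

lemma setIntegral_univ_pi_comp_of_measurePreserving {Y κ : Type*} [MeasurableSpace Y] [Fintype κ]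
    {ν : Measure Y} [IsFiniteMeasure ν] [SigmaFinite μ] {c : NNReal} {φ : X → Y} {A : Set X}
    (hφ : MeasurePreserving φ (μ.restrict A) (c • ν)) {f : (κ → Y) → E}
    (hf : AEStronglyMeasurable f (Measure.pi fun _ ↦ ν)) :
    ∫ ω in Set.univ.pi fun _ : κ ↦ A, f (φ ∘ ω) ∂Measure.pi (fun _ ↦ μ) =
      (c : ℝ) ^ Fintype.card κ • ∫ ω, f ω ∂Measure.pi fun _ ↦ ν := by
  have h_smul : Measure.pi (fun _ : κ ↦ c • ν) = c ^ Fintype.card κ • Measure.pi fun _ ↦ ν :=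
    Measure.pi_eq fun s _ ↦ by
      simp_rw [Measure.smul_apply, Measure.pi_pi, ENNReal.smul_def, smul_eq_mul,
        Finset.prod_mul_distrib, Finset.prod_const, Finset.card_univ, ENNReal.coe_pow]
  have h_pi := measurePreserving_pi (fun _ : κ ↦ μ.restrict A) (fun _ ↦ c • ν) fun _ ↦ hφ
  rw [Measure.restrict_pi_pi, ← NNReal.coe_pow, ← NNReal.smul_def,
    ← integral_smul_nnreal_measure, ← h_smul, ← h_pi.map_eq, integral_map h_pi.aemeasurable]
  · rfl
  · rw [h_pi.map_eq, h_smul]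
    exact hf.smul_measure _

lemma integral_pi_eq_sum_integral_insertNth [SigmaFinite μ] {β : Type*} [LinearOrder β]
    [TopologicalSpace β] [OrderClosedTopology β] [SecondCountableTopology β] [MeasurableSpace β]
    [OpensMeasurableSpace β] {r : X → β} (hr : Measurable r) (h_null : ∀ b, μ (r ⁻¹' {b}) = 0)
    {m : ℕ} {F : (Fin (m + 1) → X) → E} (hF : Integrable F (Measure.pi fun _ ↦ μ)) :
    ∫ ω, F ω ∂Measure.pi (fun _ ↦ μ) =
      ∑ i, ∫ p, ∫ ω in Set.univ.pi fun _ ↦ {q | r p < r q}, F (Fin.insertNth i p ω)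
        ∂Measure.pi (fun _ ↦ μ) ∂μ := by
  set S : Fin (m + 1) → Set (Fin (m + 1) → X) := fun i ↦ {ω | ∀ j, r (ω i) < r (ω (i.succAbove j))}
  have hS (i) : MeasurableSet (S i) := by
    simp only [S, Set.ofPred_forall]
    exact MeasurableSet.iInter fun j ↦ measurableSet_lt (by fun_prop) (by fun_prop)
  have h_lt {i k : Fin (m + 1)} {ω} (hω : ω ∈ S i) (hk : k ≠ i) : r (ω i) < r (ω k) := by
    obtain ⟨j, rfl⟩ := Fin.exists_succAbove_eq hk
    exact hω j
  have h_disj : Pairwise (Function.onFun Disjoint S) := fun i k hik ↦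
    Set.disjoint_left.2 fun ω hi hk ↦ lt_asymm (h_lt hi hik.symm) (h_lt hk hik)
  have h_union : (⋃ i, S i) =ᵐ[Measure.pi fun _ ↦ μ] Set.univ := by
    rw [Filter.eventuallyEq_univ]
    filter_upwards [ae_injective_comp_pi hr h_null] with ω hω
    obtain ⟨i, hi⟩ := Finite.exists_min (r ∘ ω)
    exact Set.mem_iUnion.2 ⟨i, fun j ↦ (hi _).lt_of_ne (hω.ne (i.succAbove_ne j).symm)⟩
  rw [← setIntegral_univ, ← setIntegral_congr_set h_union,
    integral_iUnion_fintype hS h_disj fun i ↦ hF.integrableOn]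
  refine Finset.sum_congr rfl fun i _ ↦ ?_
  have h_mp := (measurePreserving_piFinSuccAbove (fun _ : Fin (m + 1) ↦ μ) i).symm
  rw [← integral_indicator (hS i), ← h_mp.integral_comp', integral_prod]
  · refine integral_congr_ae (.of_forall fun p ↦ ?_)
    beta_reduce
    rw [← integral_indicator (MeasurableSet.univ_pi fun _ ↦ measurableSet_lt (by fun_prop) hr)]
    refine integral_congr_ae (.of_forall fun ω ↦ ?_)
    change (S i).indicator F (i.insertNth p ω) = _
    classical simp [Set.indicator_apply, S]
  · exact h_mp.integrable_comp_of_integrable (hF.indicator (hS i))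

lemma setIntegral_univ_pi_ite {ι : Type*} [Fintype ι] [DecidableEq ι] [SigmaFinite μ]
    (A B : Set X) (J : Finset ι) (f : (J → X) → ℝ) :
    ∫ ω in Set.univ.pi fun i ↦ if i ∈ J then A else B, f (fun i ↦ ω i) ∂Measure.pi (fun _ ↦ μ) =
      (∫ ω in Set.univ.pi fun _ ↦ A, f ω ∂Measure.pi fun _ ↦ μ) *
        μ.real B ^ (Fintype.card ι - J.card) := by
  have h_mp := measurePreserving_piEquivPiSubtypeProd (fun _ : ι ↦ μ) (· ∈ J)
  have h_preimage : (Set.univ.pi fun i ↦ if i ∈ J then A else B) =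
      MeasurableEquiv.piEquivPiSubtypeProd (fun _ : ι ↦ X) (· ∈ J) ⁻¹'
        ((Set.univ.pi fun _ ↦ A) ×ˢ Set.univ.pi fun _ ↦ B) := by
    ext ω
    simp only [Set.mem_univ_pi, Set.mem_preimage, Set.mem_prod, Subtype.forall]
    constructor
    · exact fun h ↦ ⟨fun i hi ↦ by simpa [hi] using h i, fun i hi ↦ by simpa [hi] using h i⟩
    · rintro ⟨hA, hB⟩ i
      split_ifs with hi
      exacts [hA i hi, hB i hi]
  have h_card : Fintype.card {i // i ∉ J} = Fintype.card ι - J.card := by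
    simp [Fintype.card_subtype_compl]
  rw [h_preimage]
  calc _ = ∫ z in (Set.univ.pi fun _ : J ↦ A) ×ˢ (Set.univ.pi fun _ : {i // i ∉ J} ↦ B),
          f z.1 * 1 ∂(Measure.pi fun _ ↦ μ).prod (Measure.pi fun _ ↦ μ) := by
        simp only [mul_one]
        convert h_mp.setIntegral_preimage_emb (MeasurableEquiv.measurableEmbedding _)
          (fun z ↦ f z.1) ((Set.univ.pi fun _ ↦ A) ×ˢ Set.univ.pi fun _ ↦ B)
        rfl
    _ = _ := by
        rw [setIntegral_prod_mul f fun _ ↦ (1 : ℝ)]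
        simp [Measure.real, h_card]

lemma setIntegral_univ_pi_union {ι : Type*} [Fintype ι] [SigmaFinite μ]
    {A B : Set X} (hA : MeasurableSet A) (hB : MeasurableSet B) (hAB : Disjoint A B)
    {g : (ι → X) → ℝ} (hg : IntegrableOn g (Set.univ.pi fun _ ↦ A ∪ B) (Measure.pi fun _ ↦ μ))
    {f : (J : Finset ι) → (J → X) → ℝ}
    (hf : ∀ J ω, (∀ i, ω i ∈ A ∪ B) → (∀ i, i ∈ J ↔ ω i ∈ A) → g ω = f J fun i ↦ ω i) :
    ∫ ω in Set.univ.pi fun _ ↦ A ∪ B, g ω ∂Measure.pi (fun _ ↦ μ) =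
      ∑ J, (∫ ω in Set.univ.pi fun _ ↦ A, f J ω ∂Measure.pi fun _ ↦ μ) *
        μ.real B ^ (Fintype.card ι - J.card) := by
  classical
  set S : Finset ι → Set (ι → X) := fun J ↦ Set.univ.pi fun i ↦ if i ∈ J then A else B
  have mem_S {J ω} : ω ∈ S J ↔ (∀ i, ω i ∈ A ∪ B) ∧ ∀ i, i ∈ J ↔ ω i ∈ A := by
    simp only [S, Set.mem_univ_pi, ← forall_and]
    refine forall_congr' fun i ↦ ?_
    have : ω i ∈ A → ω i ∉ B := fun h ↦ Set.disjoint_left.1 hAB h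
    by_cases hi : i ∈ J <;> simp only [hi, if_true, if_false, Set.mem_union] <;> tauto
  have hS (J) : MeasurableSet (S J) := MeasurableSet.univ_pi fun i ↦ by split_ifs <;> assumption
  have h_disj : Pairwise (Function.onFun Disjoint S) := fun J K hJK ↦
    Set.disjoint_left.2 fun ω (hJ : ω ∈ S J) (hK : ω ∈ S K) ↦ hJK <| Finset.ext fun i ↦
      ((mem_S.1 hJ).2 i).trans ((mem_S.1 hK).2 i).symm
  have h_union : (Set.univ.pi fun _ ↦ A ∪ B) = ⋃ J, S J := by
    ext ω
    simp only [Set.mem_univ_pi, Set.mem_iUnion, mem_S]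
    exact ⟨fun h ↦ ⟨Finset.univ.filter (ω · ∈ A), h, by simp⟩, fun ⟨_, h, _⟩ ↦ h⟩
  rw [h_union] at hg ⊢
  rw [integral_iUnion_fintype hS h_disj fun J ↦ hg.mono_set (Set.subset_iUnion S J)]
  refine Finset.sum_congr rfl fun J _ ↦ ?_
  rw [setIntegral_congr_fun (hS J) fun ω hω ↦ hf J ω (mem_S.1 hω).1 (mem_S.1 hω).2]
  exact setIntegral_univ_pi_ite A B J (f J)

end Pi

section UniformTriangle

lemma isOpen_openTriangle : IsOpen openTriangle :=
  ((isOpen_lt continuous_const continuous_fst).inter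
    ((isOpen_lt continuous_const continuous_snd).inter
      (isOpen_lt (continuous_fst.add continuous_snd) continuous_const)))

lemma measurableSet_openTriangle : MeasurableSet openTriangle :=
  isOpen_openTriangle.measurableSet

lemma openTriangle_subset_T : openTriangle ⊆ T := by
  rintro u ⟨hu₁, hu₂, hu₃⟩
  have hmem := (convex_convexHull ℝ {((0, 0) : ℝ × ℝ), (1, 0), (0, 1)}).sum_mem
    (t := Finset.univ) (w := ![1 - u.1 - u.2, u.1, u.2]) (z := ![(0, 0), (1, 0), (0, 1)])
    (by simpa [Fin.forall_fin_succ, hu₁.le, hu₂.le] using by linarith)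
    (by simp only [Fin.sum_univ_three, Matrix.cons_val]; ring)
    (fun i _ ↦ subset_convexHull ℝ _ (by fin_cases i <;> simp))
  simpa [T, Fin.sum_univ_three] using hmem

lemma T_subset : T ⊆ {u | 0 ≤ u.1 ∧ 0 ≤ u.2} ∩ {u | u.1 + u.2 ≤ 1} := by
  refine convexHull_min ?_ (convex_quadrant.inter
    (convex_halfSpace_le (LinearMap.fst ℝ ℝ ℝ + LinearMap.snd ℝ ℝ ℝ).isLinear 1))
  rintro u (rfl | rfl | rfl) <;> simp

lemma ae_mul_fst_add_mul_snd_ne {a b : ℝ} (hab : (a, b) ≠ 0) (k : ℝ) :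
    ∀ᵐ u : ℝ × ℝ, a * u.1 + b * u.2 ≠ k := by
  have hne : a • LinearMap.fst ℝ ℝ ℝ + b • LinearMap.snd ℝ ℝ ℝ ≠ 0 := fun h ↦ hab <|
    Prod.ext (by simpa using LinearMap.congr_fun h (1, 0))
      (by simpa using LinearMap.congr_fun h (0, 1))
  simpa [ae_iff] using addHaar_setOf_linearMap_eq volume hne k

lemma T_ae_eq_openTriangle : T =ᵐ[volume] openTriangle := by
  refine Filter.eventuallyEq_set.2 ?_
  filter_upwards [ae_mul_fst_add_mul_snd_ne (a := 1) (b := 0) (by simp) 0,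
    ae_mul_fst_add_mul_snd_ne (a := 0) (b := 1) (by simp) 0,
    ae_mul_fst_add_mul_snd_ne (a := 1) (b := 1) (by simp) 1] with u h₁ h₂ h₃
  refine ⟨fun hu ↦ ?_, fun hu ↦ openTriangle_subset_T hu⟩
  obtain ⟨⟨hu₁, hu₂⟩, hu₃⟩ := T_subset hu
  simp only [one_mul, zero_mul, add_zero, zero_add] at h₁ h₂ h₃
  exact ⟨hu₁.lt_of_ne' h₁, hu₂.lt_of_ne' h₂, lt_of_le_of_ne hu₃ h₃⟩

lemma μT_eq : μT = (2 : NNReal) • volume.restrict openTriangle := by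
  rw [μT, Measure.restrict_congr_set T_ae_eq_openTriangle]
  rfl

lemma hasFDerivAt_mk_mul_one_sub (q : ℝ × ℝ) :
    HasFDerivAt (fun q : ℝ × ℝ ↦ (q.1 * (1 - q.2), q.2))
      (Matrix.toLin (Module.Basis.finTwoProd ℝ) (Module.Basis.finTwoProd ℝ)
        !![1 - q.2, -q.1; 0, 1]).toContinuousLinearMap q := by
  rw [Matrix.toLin_finTwoProd_toContinuousLinearMap]
  exact (((hasFDerivAt_fst (𝕜 := ℝ) (p := q)).mul (hasFDerivAt_snd.const_sub 1)).prodMk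
    hasFDerivAt_snd).congr_fderiv (by ext <;> simp)

lemma image_mk_mul_one_sub :
    (fun q : ℝ × ℝ ↦ (q.1 * (1 - q.2), q.2)) '' (Set.Ioo 0 1 ×ˢ Set.Ioo 0 1) = openTriangle := by
  refine Set.Subset.antisymm ?_ fun p hp ↦ ⟨(centralProj p, p.2), ⟨centralProj_mem_Ioo hp, ?_⟩,
    (eq_mk_centralProj_mul hp).symm⟩
  · rintro _ ⟨⟨a, h⟩, ⟨⟨ha₀, ha₁⟩, hh₀, hh₁⟩, rfl⟩
    exact ⟨mul_pos ha₀ (sub_pos.2 hh₁), hh₀, by dsimp only; nlinarith⟩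
  · exact ⟨hp.2.1, by linarith [hp.1, hp.2.2]⟩

lemma integral_μT_eq_setIntegral {E : Type*} [NormedAddCommGroup E] [NormedSpace ℝ E]
    (f : ℝ → ℝ → E) :
    ∫ p, f (centralProj p) p.2 ∂μT =
      (2 : NNReal) • ∫ q in Set.Ioo 0 1 ×ˢ Set.Ioo 0 1, (1 - q.2) • f q.1 q.2 := by
  have h_inj : Set.InjOn (fun q : ℝ × ℝ ↦ (q.1 * (1 - q.2), q.2))
      (Set.Ioo 0 1 ×ˢ Set.Ioo 0 1) := by
    rintro ⟨a, h⟩ hq ⟨a', h'⟩ _ heq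
    obtain ⟨ha, rfl⟩ := Prod.mk.inj heq
    simpa [(sub_pos.2 hq.2.2).ne'] using ha
  rw [μT_eq, integral_smul_nnreal_measure, ← image_mk_mul_one_sub,
    integral_image_eq_integral_abs_det_fderiv_smul volume
      (measurableSet_Ioo.prod measurableSet_Ioo)
      (fun q _ ↦ (hasFDerivAt_mk_mul_one_sub q).hasFDerivWithinAt) h_inj]
  congr 1
  refine setIntegral_congr_fun (measurableSet_Ioo.prod measurableSet_Ioo) fun q hq ↦ ?_
  have hq₂ := sub_pos.2 hq.2.2
  simp [LinearMap.det_toLin, Matrix.det_fin_two_of, centralProj, hq₂.ne', abs_of_pos hq₂]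

lemma integral_μT_mul (f g : ℝ → ℝ) :
    ∫ p, f (centralProj p) * g p.2 ∂μT =
      2 * ((∫ a in (0 : ℝ)..1, f a) * ∫ h in (0 : ℝ)..1, (1 - h) * g h) := by
  rw [integral_μT_eq_setIntegral fun a h ↦ f a * g h,
    intervalIntegral.integral_of_le zero_le_one, intervalIntegral.integral_of_le zero_le_one,
    integral_Ioc_eq_integral_Ioo, integral_Ioc_eq_integral_Ioo, ← setIntegral_prod_mul,
    NNReal.smul_def, ← Measure.volume_eq_prod]
  simp [mul_left_comm]

instance : IsProbabilityMeasure μT := by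
  have h_int := integral_μT_mul (fun _ ↦ 1) fun _ ↦ 1
  have h_sub : ∫ h in (0 : ℝ)..1, (1 - h) = 1 / 2 := by
    simpa using integral_pow_mul_one_sub_pow 0 1
  rw [isProbabilityMeasure_iff_real]
  simpa [h_sub] using h_int

lemma ae_mem_openTriangle : ∀ᵐ p ∂μT, p ∈ openTriangle := by
  rw [μT_eq]
  exact Measure.ae_smul_measure (ae_restrict_mem measurableSet_openTriangle) _

lemma measurable_centralProj : Measurable centralProj := by
  unfold centralProj
  fun_prop

lemma μT_centralProj_preimage_singleton (b : ℝ) : μT (centralProj ⁻¹' {b}) = 0 := by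
  have h_ac : μT ≪ volume := by
    rw [μT_eq]
    exact Measure.smul_absolutelyContinuous.trans Measure.restrict_le_self.absolutelyContinuous
  suffices h_ne : ∀ᵐ p ∂μT, centralProj p ≠ b by simpa [ae_iff, Set.preimage] using h_ne
  filter_upwards [ae_mem_openTriangle,
    h_ac.ae_le (ae_mul_fst_add_mul_snd_ne (a := 1) (b := b) (by simp) b)] with p hp hne heq
  rw [centralProj, div_eq_iff (by linarith [hp.1, hp.2.2])] at heq
  exact hne (by linarith)

lemma measurePreserving_μT_affineMap {f : (ℝ × ℝ) →ᵃ[ℝ] (ℝ × ℝ)}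
    (hf : LinearMap.det f.linear ≠ 0) (hsub : f ⁻¹' openTriangle ⊆ openTriangle) :
    MeasurePreserving f (μT.restrict (f ⁻¹' openTriangle))
      (|(LinearMap.det f.linear)⁻¹|.toNNReal • μT) := by
  have hf_meas : Measurable f := f.continuous_of_finiteDimensional.measurable
  refine ⟨hf_meas, ?_⟩
  rw [μT_eq, Measure.restrict_smul, Measure.restrict_restrict_of_subset hsub, Measure.map_smul,
    ← Measure.restrict_map hf_meas measurableSet_openTriangle,
    map_affineMap_addHaar_eq_smul_addHaar volume hf, Measure.restrict_smul]
  rw [smul_comm]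
  rfl

section CutTriangle

variable {a h : ℝ}

lemma measurePreserving_triangleMap (ha₀ : 0 ≤ a) (ha : a < 1) (hh : 0 < h) (hh₁ : h ≤ 1) :
    MeasurePreserving (triangleMap a h) (μT.restrict (cutTriangle a h))
      (((1 - a) * h).toNNReal • μT) := by
  have hpos : 0 < (1 - a) * h := mul_pos (sub_pos.2 ha) hh
  have h_mp := measurePreserving_μT_affineMap (f := triangleMap a h)
    (by rw [det_linear_triangleMap]; positivity) (cutTriangle_subset_openTriangle ha₀ ha hh hh₁)
  rwa [det_linear_triangleMap, inv_inv, abs_of_pos hpos] at h_mp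

lemma measurableSet_cutTriangle (a h : ℝ) : MeasurableSet (cutTriangle a h) :=
  measurableSet_openTriangle.preimage
    (triangleMap a h).continuous_of_finiteDimensional.measurable

lemma measureReal_cutTriangle (ha₀ : 0 ≤ a) (ha : a < 1) (hh : 0 < h) (hh₁ : h ≤ 1) :
    μT.real (cutTriangle a h) = (1 - a) * h := by
  have h_univ := (measurePreserving_triangleMap ha₀ ha hh hh₁).measure_preimage
    MeasurableSet.univ.nullMeasurableSet
  rw [Set.preimage_univ, Measure.restrict_apply_univ] at h_univ
  rw [Measure.real, h_univ]
  simp [(mul_pos (sub_pos.2 ha) hh).le]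

lemma measureReal_cutTriangle_one_sdiff (ha₀ : 0 ≤ a) (ha : a < 1) (hh : 0 < h) (hh₁ : h ≤ 1) :
    μT.real (cutTriangle a 1 \ cutTriangle a h) = (1 - a) * (1 - h) := by
  rw [measureReal_sdiff (cutTriangle_subset_cutTriangle ha hh hh₁) (measurableSet_cutTriangle a h),
    measureReal_cutTriangle ha₀ ha one_pos le_rfl, measureReal_cutTriangle ha₀ ha hh hh₁]
  ring

end CutTriangle

-- For `p` uniform in `T` these are the masses of the triangle below the apex `p` and of the rest of
-- the region to the right of `p`.
lemma integral_pow_mul_pow_centralProj (j k : ℕ) :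
    ∫ p, ((1 - centralProj p) * p.2) ^ j * ((1 - centralProj p) * (1 - p.2)) ^ k ∂μT =
      2 / (j + k + 1) * (j.factorial * (k + 1).factorial / (j + k + 2).factorial) := by
  calc _ = ∫ p, (1 - centralProj p) ^ (j + k) * (p.2 ^ j * (1 - p.2) ^ k) ∂μT := by
        congr with p
        simp only [mul_pow, pow_add]
        ring
    _ = 2 * ((∫ a in (0 : ℝ)..1, a ^ 0 * (1 - a) ^ (j + k)) *
          ∫ h in (0 : ℝ)..1, h ^ j * (1 - h) ^ (k + 1)) := by
        rw [integral_μT_mul (fun a ↦ (1 - a) ^ (j + k)) fun h ↦ h ^ j * (1 - h) ^ k]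
        congr! 4
        · simp
        · ring
    _ = _ := by
        rw [integral_pow_mul_one_sub_pow, integral_pow_mul_one_sub_pow, zero_add,
          Nat.factorial_succ (j + k), ← add_assoc]
        push_cast
        field_simp
        simp

end UniformTriangle

section GeneratingFunction

variable {ι : Type*} (t : ℝ)

lemma integrable_pow_chainVertexCount_comp [Finite ι] {Ω : Type*} [MeasurableSpace Ω]
    {ν : Measure Ω} [IsFiniteMeasure ν] {f : Ω → ι → ℝ × ℝ} (hf : Measurable f) :
    Integrable (fun x ↦ t ^ chainVertexCount (f x)) ν := by
  refine .of_bound (C := (1 + |t|) ^ Nat.card ι)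
    ((measurable_of_countable (t ^ ·)).comp
      (measurable_chainVertexCount.comp hf)).aestronglyMeasurable (.of_forall fun x ↦ ?_)
  rw [norm_pow, Real.norm_eq_abs]
  calc |t| ^ chainVertexCount (f x) ≤ (1 + |t|) ^ chainVertexCount (f x) := by
        gcongr
        linarith
    _ ≤ (1 + |t|) ^ Nat.card ι :=
        pow_le_pow_right₀ (by linarith [abs_nonneg t]) (chainVertexCount_le_card _)

variable [Fintype ι]

lemma N_ae_eq_chainVertexCount (n : ℕ) : ∀ᵐ ω ∂P n, N n ω = chainVertexCount ω := by
  have h_mem : ∀ᵐ ω ∂P n, ∀ i, ω i ∈ openTriangle := ae_all_iff.2 fun i ↦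
    (Measure.quasiMeasurePreserving_eval _ i).ae ae_mem_openTriangle
  filter_upwards [h_mem, ae_injective_comp_pi measurable_centralProj
    μT_centralProj_preimage_singleton] with ω hω h_inj
  exact N_eq_chainVertexCount h_inj.of_comp hω

lemma integral_pow_chainVertexCount :
    ∫ ω : ι → ℝ × ℝ, t ^ chainVertexCount ω ∂Measure.pi (fun _ ↦ μT) = G (Fintype.card ι) t := by
  have h_mp := measurePreserving_piCongrLeft (fun _ : ι ↦ μT) (Fintype.equivFin ι).symm
  calc _ = ∫ ω, t ^ chainVertexCount ω ∂P (Fintype.card ι) := by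
        rw [← h_mp.integral_comp', P]
        congr with ω
        rw [← chainVertexCount_comp_equiv (Fintype.equivFin ι).symm]
        congr 2
        funext k
        exact MeasurableEquiv.piCongrLeft_apply_apply (β := fun _ ↦ ℝ × ℝ) _ ω k
    _ = G (Fintype.card ι) t := integral_congr_ae <| by
        filter_upwards [N_ae_eq_chainVertexCount (Fintype.card ι)] with ω hω
        rw [hω]

lemma G_zero : G 0 t = 1 := by
  have h_count (ω : Fin 0 → ℝ × ℝ) : chainVertexCount ω = 0 :=
    Nat.le_zero.1 ((chainVertexCount_le_card ω).trans_eq (Nat.card_fin 0))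
  rw [← Fintype.card_fin 0, ← integral_pow_chainVertexCount]
  simp [h_count]

lemma setIntegral_pow_chainVertexCount_triangleMap {a h : ℝ} (ha₀ : 0 ≤ a) (ha : a < 1)
    (hh : 0 < h) (hh₁ : h ≤ 1) :
    ∫ ω in Set.univ.pi fun _ : ι ↦ cutTriangle a h,
        t ^ (chainVertexCount (fun k ↦ triangleMap a h (ω k)) + 1) ∂Measure.pi (fun _ ↦ μT) =
      t * (((1 - a) * h) ^ Fintype.card ι * G (Fintype.card ι) t) := by
  have h_eq := setIntegral_univ_pi_comp_of_measurePreserving (κ := ι)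
    (measurePreserving_triangleMap ha₀ ha hh hh₁)
    (f := fun ω ↦ t ^ chainVertexCount ω)
    (integrable_pow_chainVertexCount_comp t measurable_id).aestronglyMeasurable
  rw [integral_pow_chainVertexCount, Real.coe_toNNReal _ (mul_pos (sub_pos.2 ha) hh).le,
    smul_eq_mul] at h_eq
  simp_rw [pow_succ', integral_const_mul]
  rw [← h_eq]
  rfl

variable {m : ℕ} {p : ℝ × ℝ}

lemma univ_pi_centralProj_lt_ae_eq (hp : p ∈ openTriangle) :
    (Set.univ.pi fun _ : ι ↦ {q | centralProj p < centralProj q}) =ᵐ[Measure.pi fun _ ↦ μT]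
      Set.univ.pi fun _ : ι ↦ cutTriangle (centralProj p) 1 := by
  obtain ⟨ha₀, ha₁⟩ := centralProj_mem_Ioo hp
  refine Measure.ae_eq_set_pi fun _ _ ↦ Filter.eventuallyEq_set.2 ?_
  filter_upwards [ae_mem_openTriangle] with q hq
  simp [cutTriangle_one ha₀.le ha₁, hq]

lemma setIntegral_pow_chainVertexCount_insertNth (i : Fin (m + 1)) (hp : p ∈ openTriangle) :
    ∫ ω in Set.univ.pi fun _ ↦ {q | centralProj p < centralProj q},
        t ^ chainVertexCount (i.insertNth p ω : Fin (m + 1) → ℝ × ℝ) ∂Measure.pi (fun _ ↦ μT) =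
      ∑ j ∈ Finset.range (m + 1), t * m.choose j * G j t *
        (((1 - centralProj p) * p.2) ^ j * ((1 - centralProj p) * (1 - p.2)) ^ (m - j)) := by
  obtain ⟨ha₀, ha₁⟩ := centralProj_mem_Ioo hp
  have hh₀ : 0 < p.2 := hp.2.1
  have hh₁ : p.2 ≤ 1 := by linarith [hp.1, hp.2.2]
  set a := centralProj p with ha
  set A := cutTriangle a p.2 with hA
  have hA_meas : MeasurableSet A := measurableSet_cutTriangle _ _
  have h_union : cutTriangle a 1 = A ∪ cutTriangle a 1 \ A :=
    (Set.union_sdiff_cancel (cutTriangle_subset_cutTriangle ha₁ hh₀ hh₁)).symm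
  have h_meas : Measurable fun ω ↦ (i.insertNth p ω : Fin (m + 1) → ℝ × ℝ) :=
    (MeasurableEquiv.piFinSuccAbove (fun _ ↦ ℝ × ℝ) i).symm.measurable.comp
      measurable_prodMk_left
  rw [setIntegral_congr_set (univ_pi_centralProj_lt_ae_eq hp), ← ha, h_union,
    setIntegral_univ_pi_union hA_meas ((measurableSet_cutTriangle _ _).diff hA_meas)
      Set.disjoint_sdiff_right (integrable_pow_chainVertexCount_comp t h_meas).integrableOn
      (f := fun J ω ↦ t ^ (chainVertexCount (fun k ↦ triangleMap a p.2 (ω k)) + 1))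
      fun J ω hω hJ ↦ by rw [chainVertexCount_insertNth i hp (fun j ↦ h_union ▸ hω j) hJ]]
  simp_rw [hA, setIntegral_pow_chainVertexCount_triangleMap t ha₀.le ha₁ hh₀ hh₁,
    measureReal_cutTriangle_one_sdiff ha₀.le ha₁ hh₀ hh₁, Fintype.card_coe, Fintype.card_fin]
  rw [← Finset.powerset_univ, Finset.sum_powerset_apply_card
    (fun j ↦ t * (((1 - a) * p.2) ^ j * G j t) * ((1 - a) * (1 - p.2)) ^ (m - j))]
  simp only [Finset.card_univ, Fintype.card_fin, nsmul_eq_mul]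
  exact Finset.sum_congr rfl fun j _ ↦ by ring

lemma integrable_pow_mul_pow_centralProj (j k : ℕ) :
    Integrable (fun p ↦ ((1 - centralProj p) * p.2) ^ j *
      ((1 - centralProj p) * (1 - p.2)) ^ k) μT := by
  have := measurable_centralProj
  refine .of_bound (C := 1) (Measurable.aestronglyMeasurable (by fun_prop)) ?_
  filter_upwards [ae_mem_openTriangle] with p hp
  obtain ⟨ha₀, ha₁⟩ := centralProj_mem_Ioo hp
  have hh₀ : 0 < p.2 := hp.2.1
  have hh₁ : p.2 < 1 := by linarith [hp.1, hp.2.2]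
  rw [norm_mul, norm_pow, norm_pow]
  refine mul_le_one₀ (pow_le_one₀ (norm_nonneg _) ?_) (by positivity)
    (pow_le_one₀ (norm_nonneg _) ?_) <;>
  · rw [Real.norm_eq_abs, abs_le]
    constructor <;> nlinarith

lemma choose_mul_integral_pow_mul_pow_centralProj (j k : ℕ) :
    ((j + k).choose j : ℝ) *
        ∫ p, ((1 - centralProj p) * p.2) ^ j * ((1 - centralProj p) * (1 - p.2)) ^ k ∂μT =
      2 * (k + 1) / ((j + k + 1) ^ 2 * (j + k + 2)) := by
  rw [integral_pow_mul_pow_centralProj, Nat.cast_add_choose]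
  simp only [Nat.factorial_succ]
  push_cast
  field_simp
  ring

lemma G_succ_eq_sum_mul_integral (m : ℕ) : G (m + 1) t =
    (m + 1) * ∑ j ∈ Finset.range (m + 1), t * m.choose j * G j t *
      ∫ p, ((1 - centralProj p) * p.2) ^ j * ((1 - centralProj p) * (1 - p.2)) ^ (m - j) ∂μT := by
  calc G (m + 1) t = ∑ i : Fin (m + 1), ∫ p, ∫ ω in
          Set.univ.pi fun _ ↦ {q | centralProj p < centralProj q},
          t ^ chainVertexCount (i.insertNth p ω : Fin (m + 1) → ℝ × ℝ)
            ∂Measure.pi (fun _ ↦ μT) ∂μT := by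
        have h := integral_pow_chainVertexCount (ι := Fin (m + 1)) t
        rw [Fintype.card_fin] at h
        rw [← h]
        exact integral_pi_eq_sum_integral_insertNth measurable_centralProj
          μT_centralProj_preimage_singleton (integrable_pow_chainVertexCount_comp t measurable_id)
    _ = ∑ i : Fin (m + 1), ∫ p, ∑ j ∈ Finset.range (m + 1), t * m.choose j * G j t *
        (((1 - centralProj p) * p.2) ^ j * ((1 - centralProj p) * (1 - p.2)) ^ (m - j)) ∂μT :=
        Finset.sum_congr rfl fun i _ ↦ integral_congr_ae <| by
          filter_upwards [ae_mem_openTriangle] with p hp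
          exact setIntegral_pow_chainVertexCount_insertNth t i hp
    _ = _ := by
        rw [Finset.sum_const, integral_finsetSum _ fun j _ ↦
          (integrable_pow_mul_pow_centralProj j (m - j)).const_mul _]
        simp [integral_const_mul]

lemma G_succ (m : ℕ) : G (m + 1) t =
    2 * t / ((m + 1) * (m + 2)) * ∑ j ∈ Finset.range (m + 1), ((m : ℝ) + 1 - j) * G j t := by
  rw [G_succ_eq_sum_mul_integral, Finset.mul_sum, Finset.mul_sum]
  refine Finset.sum_congr rfl fun j hj ↦ ?_
  obtain ⟨k, rfl⟩ := Nat.exists_eq_add_of_le (Finset.mem_range_succ_iff.1 hj)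
  have h_moment := choose_mul_integral_pow_mul_pow_centralProj j k
  rw [Nat.add_sub_cancel_left]
  calc _ = (j + k + 1) * t * G j t * (2 * (k + 1) / ((j + k + 1) ^ 2 * (j + k + 2))) := by
        rw [← h_moment]
        push_cast
        ring
    _ = _ := by
        push_cast
        field_simp
        ring

end GeneratingFunction

/-- exact formula for the probability generating function `G_n`. -/
theorem stmt10 (n : ℕ) (hn : 1 ≤ n) (t : ℝ) :
    (G n t = 1 + ∑ l ∈ Finset.Icc 1 n, (-1 : ℝ) ^ l * (n.choose l : ℝ) *
        ∏ i ∈ Finset.Icc 1 l, (1 - 2 * t / ((i : ℝ) * ((i : ℝ) + 1)))) ∧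
    (G n t = ∑ k ∈ Finset.Icc 1 n, t ^ k *
        ∑ l ∈ Finset.Icc k n, (-1 : ℝ) ^ (l + k) * (n.choose l : ℝ) * c k l) := by
  have h_transform := eq_binomialTransform_of_recurrence (g := fun m ↦ G m t) (G_zero t)
    (G_succ t) n
  exact ⟨h_transform.trans (binomialTransform_pgfProd_eq_one_add t n),
    h_transform.trans (binomialTransform_pgfProd_eq_sum_pow t (Nat.one_le_iff_ne_zero.1 hn))⟩

end
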